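/- Let c_2 ∈ ℝ with c_2 ∉ {0, 1/3, 2/3, 1}, and consider the 3-stage explicit Runge–Kutta method with a_{21} = c_2, a_{31} = (3c_2 − 1 − 3c_2²)/(c_2(2 − 3c_2)), a_{32} = (1 − c_2)/(c_2(2 − 3c_2)), b_1 = (3c_2 − 1)/(6c_2), b_2 = 1/(6c_2(1 − c_2)), b_3 = (2 − 3c_2)/(6(1 − c_2)), c_1 = 0, c_3 = 1, and adjoint coefficients ā_{ij} = b_j − b_j·a_{ji}/b_1 for i = 1 (i.e., ā_{1j} = b_j − b_j·a_{j1}/b_1). Then Σ_{j=1}^3 ā_{1j}·c_j = (1 − c_2)/(2(3c_2 − 1)) ≠ 0; in particular the third-order internal-stage condition Σ_j ā_{1j}·c_j = c_1²/2 = 0 fails for every admissible c_2, so no 3-stage explicit Runge–Kutta method of third order in optimal control can produce a third-order first internal-stage control. -/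

import Mathlib

/-!
Summing the adjoint coefficients against the abscissae gives
`∑ j, ā i j * c j = ∑ j, b j * c j - (∑ j, b j * c j * a j i) / b i`, whose first term is `1 / 2` by
the order conditions. For an explicit three-stage method the row sums express the first column of
`a` through the abscissae and `a₃₂`, so for the first stage the numerator is
`∑ j, b j * c j ^ 2 - b₃ * c₃ * a₃₂`, which the conditions of order three evaluate. They also
determine `b₁`, and when `c₃ = 1` they give `6 * b₂ * c₂ * (1 - c₂) = 1`, so `c₂ ≠ 1`.
-/

open Matrix

/-- The coefficients of a Runge–Kutta method with stages indexed by `ι`; its abscissae are not data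
but the row sums `ButcherTableau.c`. -/
structure ButcherTableau (ι K : Type*) where
  a : Matrix ι ι K
  b : ι → K

namespace ButcherTableau

variable {ι K : Type*} [Field K]

/-- The coefficients `ā` of the symplectic partner, which discretizes the costate equation of an
optimal control problem. The row `i` is meaningful only if `b i ≠ 0`. -/
def adjoint (T : ButcherTableau ι K) : Matrix ι ι K :=
  of fun i j ↦ T.b j - T.b j * T.a j i / T.b i

/-- A Runge–Kutta method is explicit if its coefficient matrix is strictly lower triangular. -/
def IsExplicit [LE ι] (T : ButcherTableau ι K) : Prop :=
  ∀ i j, i ≤ j → T.a i j = 0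

variable [Fintype ι]

/-- The abscissae (nodes) of a Runge–Kutta method. -/
def c (T : ButcherTableau ι K) (i : ι) : K :=
  ∑ j, T.a i j

/-- The classical conditions for order three, one for each rooted tree with at most three vertices.
They are cleared of denominators, so that they exclude the characteristics two and three. -/
structure IsThirdOrder (T : ButcherTableau ι K) : Prop where
  sum_b : ∑ i, T.b i = 1
  b_dotProduct_c : 2 * (T.b ⬝ᵥ T.c) = 1
  b_dotProduct_c_sq : 3 * (T.b ⬝ᵥ T.c ^ 2) = 1
  b_dotProduct_a_mulVec_c : 6 * (T.b ⬝ᵥ T.a *ᵥ T.c) = 1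

theorem adjoint_mulVec_apply (T : ButcherTableau ι K) (v : ι → K) (i : ι) :
    (T.adjoint *ᵥ v) i = T.b ⬝ᵥ v - ((T.b * v) ᵥ* T.a) i / T.b i := by
  simp only [adjoint, mulVec, vecMul, dotProduct, of_apply, Pi.mul_apply, Finset.sum_div,
    ← Finset.sum_sub_distrib]
  exact Finset.sum_congr rfl fun j _ ↦ by ring

section ThreeStage

variable {T : ButcherTableau (Fin 3) K}

theorem IsExplicit.c_zero (hT : T.IsExplicit) : T.c 0 = 0 :=
  Finset.sum_eq_zero fun j _ ↦ hT 0 j (Fin.zero_le j)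

theorem IsExplicit.c_one (hT : T.IsExplicit) : T.c 1 = T.a 1 0 := by
  simp [c, Fin.sum_univ_three, hT 1 1 le_rfl, hT 1 2 (by decide)]

theorem IsExplicit.c_two (hT : T.IsExplicit) : T.c 2 = T.a 2 0 + T.a 2 1 := by
  simp [c, Fin.sum_univ_three, hT 2 2 le_rfl]

namespace IsThirdOrder

theorem six_mul_b_zero_mul_c_mul_c (h : T.IsThirdOrder) (hT : T.IsExplicit) :
    6 * (T.b 0 * T.c 1 * T.c 2) = 6 * T.c 1 * T.c 2 - 3 * (T.c 1 + T.c 2) + 2 := by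
  have h₀ := h.sum_b
  have h₁ := h.b_dotProduct_c
  have h₂ := h.b_dotProduct_c_sq
  simp only [dotProduct, Fin.sum_univ_three, Pi.pow_apply, hT.c_zero] at h₀ h₁ h₂
  -- Integrate `(T.c 1 - t) * (T.c 2 - t)`, which vanishes at the other two nodes.
  linear_combination 6 * T.c 1 * T.c 2 * h₀ - 3 * (T.c 1 + T.c 2) * h₁ + 2 * h₂

theorem six_mul_b_one_mul_c_mul_sub (h : T.IsThirdOrder) (hT : T.IsExplicit) :
    6 * (T.b 1 * T.c 1 * (T.c 2 - T.c 1)) = 3 * T.c 2 - 2 := by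
  have h₁ := h.b_dotProduct_c
  have h₂ := h.b_dotProduct_c_sq
  simp only [dotProduct, Fin.sum_univ_three, Pi.pow_apply, hT.c_zero] at h₁ h₂
  -- Integrate `t * (T.c 2 - t)`, which vanishes at the other two nodes.
  linear_combination 3 * T.c 2 * h₁ - 2 * h₂

theorem six_mul_c_one_mul_vecMul_a (h : T.IsThirdOrder) (hT : T.IsExplicit) :
    6 * T.c 1 * ((T.b * T.c) ᵥ* T.a) 0 = 2 * T.c 1 - T.c 2 := by
  have hsq : 3 * (T.b 1 * T.c 1 ^ 2 + T.b 2 * T.c 2 ^ 2) = 1 := by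
    simpa [dotProduct, Fin.sum_univ_three, hT.c_zero] using h.b_dotProduct_c_sq
  have htall : 6 * (T.b 2 * (T.a 2 1 * T.c 1)) = 1 := by
    simpa [dotProduct, mulVec, Fin.sum_univ_three, hT.c_zero, hT 0 1 (by decide),
      hT 0 2 (by decide), hT 1 1 le_rfl, hT 1 2 (by decide), hT 2 2 le_rfl]
      using h.b_dotProduct_a_mulVec_c
  have hcol : ((T.b * T.c) ᵥ* T.a) 0 =
      T.b 1 * T.c 1 ^ 2 + T.b 2 * T.c 2 ^ 2 - T.b 2 * T.c 2 * T.a 2 1 := by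
    simp only [vecMul, dotProduct, Fin.sum_univ_three, Pi.mul_apply, hT.c_zero]
    linear_combination -T.b 1 * T.c 1 * hT.c_one - T.b 2 * T.c 2 * hT.c_two
  rw [hcol]
  linear_combination 2 * T.c 1 * hsq - T.c 2 * htall

end IsThirdOrder

end ThreeStage

/-- The three-stage explicit methods of order three in optimal control (Table 5 of the paper),
parametrized by the second abscissa `x`; at `x = 0`, `2 / 3` and `1` some entries have junk values
because of division by zero. -/
def thirdOrderTableau (x : K) : ButcherTableau (Fin 3) K where
  a := !![0, 0, 0;
          x, 0, 0;
          (3 * x - 1 - 3 * x ^ 2) / (x * (2 - 3 * x)), (1 - x) / (x * (2 - 3 * x)), 0]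
  b := ![(3 * x - 1) / (6 * x), 1 / (6 * x * (1 - x)), (2 - 3 * x) / (6 * (1 - x))]

theorem thirdOrderTableau_isExplicit (x : K) : (thirdOrderTableau x).IsExplicit := by
  intro i j hij
  fin_cases i <;> fin_cases j <;> simp_all [thirdOrderTableau]

theorem thirdOrderTableau_c {x : K} (h₀ : x ≠ 0) (h₂ : 2 - 3 * x ≠ 0) :
    (thirdOrderTableau x).c = ![0, x, 1] := by
  have hrow : (3 * x - 1 - 3 * x ^ 2) / (x * (2 - 3 * x)) + (1 - x) / (x * (2 - 3 * x)) = 1 := by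
    rw [← add_div, div_eq_one_iff_eq (mul_ne_zero h₀ h₂)]
    ring
  ext i
  fin_cases i <;> simp [c, thirdOrderTableau, Fin.sum_univ_three, hrow]

theorem thirdOrderTableau_isThirdOrder {x : K} (h₆ : (6 : K) ≠ 0) (h₀ : x ≠ 0)
    (h₁ : 1 - x ≠ 0) (h₂ : 2 - 3 * x ≠ 0) : (thirdOrderTableau x).IsThirdOrder := by
  have hc := thirdOrderTableau_c h₀ h₂
  constructor
  case b_dotProduct_a_mulVec_c =>
    simp only [hc, mulVec, dotProduct, Fin.sum_univ_three]
    simp only [thirdOrderTableau, of_apply, cons_val, mul_zero, zero_mul, zero_add, add_zero]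
    field_simp
  all_goals
    simp only [hc, dotProduct, Fin.sum_univ_three, Pi.pow_apply]
    simp only [thirdOrderTableau, cons_val]
    field_simp
    ring

end ButcherTableau

open ButcherTableau

theorem stmt_10_general {K : Type*} [Field K] {T : ButcherTableau (Fin 3) K}
    (hT : T.IsExplicit) (h : T.IsThirdOrder) (hc : T.c 2 = 1) (hb : T.b 0 ≠ 0) :
    (T.adjoint *ᵥ T.c) 0 = (1 - T.c 1) / (2 * (3 * T.c 1 - 1)) ∧
      (1 - T.c 1) / (2 * (3 * T.c 1 - 1)) ≠ 0 ∧
      (T.adjoint *ᵥ T.c) 0 ≠ T.c 0 ^ 2 / 2 := by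
  have hb₀ : 6 * T.c 1 * T.b 0 = 3 * T.c 1 - 1 := by
    linear_combination h.six_mul_b_zero_mul_c_mul_c hT - (6 * T.c 1 * T.b 0 - 6 * T.c 1 + 3) * hc
  have hb₁ : 6 * (T.b 1 * T.c 1 * (1 - T.c 1)) = 1 := by
    linear_combination h.six_mul_b_one_mul_c_mul_sub hT - (6 * T.b 1 * T.c 1 - 3) * hc
  have hc₁ : 1 - T.c 1 ≠ 0 := fun h₀ ↦ by simp [h₀] at hb₁
  have hc₀ : T.c 1 ≠ 0 := fun h₀ ↦ by simp [h₀] at hb₁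
  have hsix : (6 : K) ≠ 0 := left_ne_zero_of_mul_eq_one hb₁
  have htwo : (2 : K) ≠ 0 := left_ne_zero_of_mul_eq_one h.b_dotProduct_c
  have hden : 2 * (3 * T.c 1 - 1) ≠ 0 :=
    mul_ne_zero htwo (hb₀ ▸ mul_ne_zero (mul_ne_zero hsix hc₀) hb)
  have hne := div_ne_zero hc₁ hden
  have hsum : (T.adjoint *ᵥ T.c) 0 = (1 - T.c 1) / (2 * (3 * T.c 1 - 1)) := by
    have hcol : 6 * T.c 1 * ((T.b * T.c) ᵥ* T.a) 0 = 2 * T.c 1 - 1 :=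
      hc ▸ h.six_mul_c_one_mul_vecMul_a hT
    rw [adjoint_mulVec_apply, eq_div_iff hden, ← hb₀]
    field_simp
    linear_combination 6 * T.c 1 * T.b 0 * h.b_dotProduct_c - 2 * hcol + hb₀
  refine ⟨hsum, hne, ?_⟩
  simpa [hsum, hT.c_zero] using hne

/-- For the general 3-stage explicit Runge–Kutta method of third order in
optimal control (parameter `c₂ ∉ {0, 1/3, 2/3, 1}`), the first row of adjoint
coefficients satisfies `Σ_j ā_{1j}·c_j = (1 − c₂)/(2(3c₂ − 1)) ≠ 0`, so the
third-order internal-stage condition `Σ_j ā_{1j}·c_j = c₁²/2 = 0` fails. -/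
theorem stmt_10 (c2 : ℝ) (h0 : c2 ≠ 0) (h13 : c2 ≠ 1 / 3) (h23 : c2 ≠ 2 / 3)
    (h1 : c2 ≠ 1)
    (a21 a31 a32 b1 b2 b3 c1 c3 : ℝ)
    (ha21 : a21 = c2)
    (ha31 : a31 = (3 * c2 - 1 - 3 * c2 ^ 2) / (c2 * (2 - 3 * c2)))
    (ha32 : a32 = (1 - c2) / (c2 * (2 - 3 * c2)))
    (hb1 : b1 = (3 * c2 - 1) / (6 * c2))
    (hb2 : b2 = 1 / (6 * c2 * (1 - c2)))
    (hb3 : b3 = (2 - 3 * c2) / (6 * (1 - c2)))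
    (hc1 : c1 = 0) (hc3 : c3 = 1)
    (abar11 abar12 abar13 : ℝ)
    (h11 : abar11 = b1 - b1 * 0 / b1)
    (h12 : abar12 = b2 - b2 * a21 / b1)
    (h13' : abar13 = b3 - b3 * a31 / b1) :
    abar11 * c1 + abar12 * c2 + abar13 * c3 = (1 - c2) / (2 * (3 * c2 - 1)) ∧
      (1 - c2) / (2 * (3 * c2 - 1)) ≠ 0 ∧
      abar11 * c1 + abar12 * c2 + abar13 * c3 ≠ c1 ^ 2 / 2 := by
  have h₁ : 1 - c2 ≠ 0 := sub_ne_zero.mpr h1.symm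
  have h₂ : 2 - 3 * c2 ≠ 0 := fun h ↦ h23 (by linarith)
  have h₃ : 3 * c2 - 1 ≠ 0 := fun h ↦ h13 (by linarith)
  have hc := thirdOrderTableau_c h0 h₂
  subst a21 a31 b1 b2 b3 c1 c3 abar11 abar12 abar13
  have hgen := stmt_10_general (thirdOrderTableau_isExplicit c2)
    (thirdOrderTableau_isThirdOrder (by norm_num) h0 h₁ h₂) (by simp [hc])
    (div_ne_zero h₃ (mul_ne_zero (by norm_num) h0))
  rw [hc] at hgen
  simpa [thirdOrderTableau, adjoint, mulVec, dotProduct, Fin.sum_univ_three] using hgen
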